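/- arXiv:1905.01401 — 12 statements merged into one kernel-verified Lean document; each statement's English description precedes it below -/
import Mathlib

section
/- Let A be a candidate such that for every other candidate B ≠ A the bipartite graph G(A,B) has a perfect matching (i.e., A is in the matching uncovered set). Then for every metric d on C ∪ V consistent with the voting profile and every candidate B, Σ_{v ∈ V} d(A,v) ≤ 3 · Σ_{v ∈ V} d(B,v). In other words, selecting any candidate from the matching uncovered set guarantees distortion at most 3. -/
/-- `d` is a metric: nonnegative, symmetric and satisfying the triangle inequality. -/
def IsMetric {α : Type*} (d : α → α → ℝ) : Prop :=
  (∀ x y, 0 ≤ d x y) ∧ (∀ x y, d x y = d y x) ∧ (∀ x y z, d x z ≤ d x y + d y z)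

/-- `d` on the entities `C ⊕ V` is consistent with the voting profile `pref`
(where `pref v X Y` means voter `v` strictly prefers candidate `X` to `Y`):
a more-preferred candidate is at weakly smaller distance. -/
def Consistent {C V : Type*} (pref : V → C → C → Prop) (d : C ⊕ V → C ⊕ V → ℝ) : Prop :=
  ∀ (v : V) (X Y : C), pref v X Y → d (Sum.inl X) (Sum.inr v) ≤ d (Sum.inl Y) (Sum.inr v)

/-- Edge of the bipartite graph `G(A,B)` between left copy `v` and right copy `v'`
of the voters: `P_v(B) ∩ Q_{v'}(A) ≠ ∅`, i.e. some candidate `Z` is liked at least as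
much as `B` by `v` and at most as much as `A` by `v'`. -/
def GEdge {C V : Type*} (pref : V → C → C → Prop) (A B : C) (v v' : V) : Prop :=
  ∃ Z : C, (Z = B ∨ pref v Z B) ∧ (Z = A ∨ pref v' A Z)

/-- The bipartite graph `G(A,B)` (both sides a copy of the voter set) has a perfect
matching. -/
def HasPM {C V : Type*} (pref : V → C → C → Prop) (A B : C) : Prop :=
  ∃ M : V ≃ V, ∀ v : V, GEdge pref A B v (M v)

/-- The weight `w(X,Y)` of the weighted tournament graph: the fraction of voters
preferring `X` to `Y`. -/
noncomputable def wgt {C V : Type*} [Fintype V] (pref : V → C → C → Prop) (X Y : C) : ℝ :=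
  (Nat.card {v : V // pref v X Y} : ℝ) / (Fintype.card V : ℝ)

/-- Theorem 4.4: selecting any candidate `A` from the matching uncovered set (i.e. such
that `G(A,B)` has a perfect matching for every other candidate `B`) guarantees
distortion at most `3`: for every consistent metric `d` and every candidate `B`,
`∑_v d(A,v) ≤ 3 ∑_v d(B,v)`. -/
theorem stmt_0 {C V : Type*} [Fintype C] [Fintype V]
    (pref : V → C → C → Prop) (hpref : ∀ v, IsStrictTotalOrder C (pref v))
    (A : C) (hA : ∀ B : C, B ≠ A → HasPM pref A B)
    (d : C ⊕ V → C ⊕ V → ℝ) (hd : IsMetric d) (hcons : Consistent pref d)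
    (B : C) :
    ∑ v : V, d (Sum.inl A) (Sum.inr v) ≤ 3 * ∑ v : V, d (Sum.inl B) (Sum.inr v) := by
  obtain ⟨h0, hs, ht⟩ := hd
  by_cases hB : B = A
  · subst hB
    have : 0 ≤ ∑ v : V, d (Sum.inl B) (Sum.inr v) := Finset.sum_nonneg fun v _ => h0 _ _
    linarith
  obtain ⟨M, hM⟩ := hA B hB
  have key : ∀ v, d (Sum.inl A) (Sum.inr (M v)) ≤
      2 * d (Sum.inl B) (Sum.inr v) + d (Sum.inl B) (Sum.inr (M v)) := by
    intro v
    obtain ⟨Z, h1, h2⟩ := hM v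
    have e1 : d (Sum.inl Z) (Sum.inr v) ≤ d (Sum.inl B) (Sum.inr v) := by
      rcases h1 with h | h
      · rw [h]
      · exact hcons _ _ _ h
    have e2 : d (Sum.inl A) (Sum.inr (M v)) ≤ d (Sum.inl Z) (Sum.inr (M v)) := by
      rcases h2 with h | h
      · rw [h]
      · exact hcons _ _ _ h
    have t1 := ht (Sum.inl Z) (Sum.inr v) (Sum.inr (M v))
    have t2 := ht (Sum.inr v) (Sum.inl B) (Sum.inr (M v))
    have t3 := hs (Sum.inr v) (Sum.inl B)
    linarith
  have hsum := Finset.sum_le_sum fun v (_ : v ∈ Finset.univ) => key v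
  rw [Finset.sum_add_distrib, ← Finset.mul_sum,
    Equiv.sum_comp M (fun v => d (Sum.inl A) (Sum.inr v)),
    Equiv.sum_comp M (fun v => d (Sum.inl B) (Sum.inr v))] at hsum
  linarith
end

section
/- Suppose at least half of the voters prefer candidate A to candidate B, i.e., |{v ∈ V : A ≻_v B}| ≥ m/2 where m = |V|. Then the bipartite graph G(A,B) has a perfect matching. -/
/-- If at least half of the voters prefer candidate `A` to candidate `B ≠ A`, then the
bipartite graph `G(A,B)` has a perfect matching. -/
theorem stmt_7 {C V : Type*} [Fintype C] [Fintype V]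
    (pref : V → C → C → Prop) (hpref : ∀ v, IsStrictTotalOrder C (pref v))
    (A B : C) (hAB : A ≠ B)
    (hhalf : Fintype.card V ≤ 2 * Nat.card {v : V // pref v A B}) :
    HasPM pref A B := by
  classical
  set S : Finset V := Finset.univ.filter (fun v => pref v A B) with hS
  have hc : Nat.card {v : V // pref v A B} = S.card := by
    rw [Nat.card_eq_fintype_card, Fintype.card_subtype]
  have h1 : Sᶜ.card ≤ S.card := by
    rw [Finset.card_compl]; omega
  obtain ⟨T, hTS, hT⟩ := Finset.exists_subset_card_eq h1
  let e : {x // x ∈ Sᶜ} ≃ {x // x ∈ T} := Finset.equivOfCardEq hT.symm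
  refine ⟨e.extendSubtype, fun v => ?_⟩
  by_cases hv : pref v A B
  · exact ⟨A, Or.inr hv, Or.inl rfl⟩
  · have hm : v ∈ Sᶜ := by simp [hS, hv]
    have h2 : e.extendSubtype v ∈ S := hTS (e.extendSubtype_mem v hm)
    exact ⟨B, Or.inl rfl, Or.inr (by simpa [hS] using h2)⟩
end

section
/- Let the candidate set be C = {X_1, ..., X_n} with n ≤ 3, and let V be any finite set of voters with an arbitrary voting profile. Then at least one of the bipartite graphs G(X_1,X_2), G(X_2,X_3), ..., G(X_{n-1},X_n), G(X_n,X_1) has a perfect matching. -/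
open Classical in
theorem pm_aux {C V : Type*} [Fintype V] (pref : V → C → C → Prop) (A B D : C)
    (h : ¬ HasPM pref A B) :
    (Finset.univ.filter fun v => pref v A B).card <
      (Finset.univ.filter fun v => ¬ pref v A B ∧ ¬ pref v D B).card ∨
    (Finset.univ.filter fun v => pref v A B).card <
      (Finset.univ.filter fun v => ¬ pref v A B ∧ ¬ pref v A D).card := by
  by_contra hc
  push Not at hc
  obtain ⟨h1, h2⟩ := hc
  apply h
  have hall := (Fintype.all_card_le_filter_rel_iff_exists_injective
    (fun v v' : V => GEdge pref A B v v')).1 ?_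
  · obtain ⟨f, hf, hf2⟩ := hall
    exact ⟨Equiv.ofBijective f (Finite.injective_iff_bijective.1 hf), fun v => hf2 v⟩
  intro S
  by_cases hS : ∃ v ∈ S, pref v A B
  · obtain ⟨v, hv, hAB⟩ := hS
    refine Finset.card_le_card fun w _ => ?_
    simp only [Finset.mem_filter, Finset.mem_univ, true_and]
    exact ⟨v, hv, A, Or.inr hAB, Or.inl rfl⟩
  push Not at hS
  by_cases hT : ∃ v ∈ S, pref v D B
  · obtain ⟨v, hv, hDB⟩ := hT
    have e1 : S.card ≤ (Finset.univ.filter fun v => ¬ pref v A B).card :=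
      Finset.card_le_card fun w hw => by simpa using hS w hw
    have e2 := Finset.card_filter_add_card_filter_not (s := (Finset.univ : Finset V))
      (fun v => pref v A B)
    have e3 := Finset.card_filter_add_card_filter_not (s := (Finset.univ : Finset V))
      (fun v => ¬ pref v A B ∧ ¬ pref v A D)
    have e4 : (Finset.univ.filter fun v => ¬ (¬ pref v A B ∧ ¬ pref v A D)).card ≤
        (Finset.univ.filter fun w => ∃ a ∈ S, GEdge pref A B a w).card := by
      refine Finset.card_le_card fun w hw => ?_
      simp only [Finset.mem_filter, Finset.mem_univ, true_and] at hw ⊢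
      refine ⟨v, hv, ?_⟩
      by_cases hw1 : pref w A B
      · exact ⟨B, Or.inl rfl, Or.inr hw1⟩
      · exact ⟨D, Or.inr hDB, Or.inr (by tauto)⟩
    convert (show S.card ≤ (Finset.univ.filter fun w => ∃ a ∈ S, GEdge pref A B a w).card by omega)
  · push Not at hT
    rcases S.eq_empty_or_nonempty with rfl | ⟨v, hv⟩
    · simp
    refine (Finset.card_le_card fun w hw => ?_).trans (h1.trans (Finset.card_le_card fun w hw => ?_))
    · simpa using ⟨hS w hw, hT w hw⟩
    · simp only [Finset.mem_filter, Finset.mem_univ, true_and] at hw ⊢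
      exact ⟨v, hv, B, Or.inl rfl, Or.inr hw⟩

theorem stmt_8 {C V : Type*} [Fintype V] {n : ℕ} (hn1 : 1 ≤ n) (hn3 : n ≤ 3)
    (X : Fin n → C) (hX : Function.Bijective X)
    (pref : V → C → C → Prop) (hpref : ∀ v, IsStrictTotalOrder C (pref v)) :
    ∃ i : Fin n, HasPM pref (X i) (X (finRotate n i)) := by
  classical
  have asym : ∀ v A B, pref v A B → ¬ pref v B A := fun v A B h1 h2 =>
    (hpref v).irrefl A ((hpref v).trans _ _ _ h1 h2)
  have tr : ∀ v A B D, pref v A B → pref v B D → pref v A D := fun v A B D h1 h2 =>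
    (hpref v).trans _ _ _ h1 h2
  have irr : ∀ v A, ¬ pref v A A := fun v A => (hpref v).irrefl A
  have tot : ∀ v A B, A ≠ B → ¬ pref v A B → pref v B A := fun v A B h1 h2 => by
    have := hpref v
    rcases trichotomous_of (pref v) A B with h | h | h <;> tauto
  by_contra hc
  push Not at hc
  obtain rfl | rfl | rfl : n = 1 ∨ n = 2 ∨ n = 3 := by omega
  · apply hc 0
    exact ⟨Equiv.refl _, fun v => ⟨X 0, Or.inl (by congr 1), Or.inl rfl⟩⟩
  · have k0 := pm_aux pref (X 0) (X 1) (X 0) (hc 0)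
    have k1 := pm_aux pref (X 1) (X 0) (X 1) (hc 1)
    have n01 : X 0 ≠ X 1 := fun h => by simpa using hX.1 h
    have le : ∀ A B : C, A ≠ B → (Finset.univ.filter fun v => ¬ pref v A B).card ≤
        (Finset.univ.filter fun v => pref v B A).card := fun A B hAB =>
      Finset.card_le_card fun w hw => by
        simp only [Finset.mem_filter, Finset.mem_univ, true_and] at hw ⊢
        exact tot w A B hAB hw
    have l0 := le _ _ n01
    have l1 := le _ _ n01.symm
    simp only [irr, not_false_eq_true, and_true, and_self] at k0 k1
    omega
  · have k0 := pm_aux pref (X 0) (X 1) (X 2) (hc 0)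
    have k1 := pm_aux pref (X 1) (X 2) (X 0) (hc 1)
    have k2 := pm_aux pref (X 2) (X 0) (X 1) (hc 2)
    have n01 : X 0 ≠ X 1 := fun h => by simpa using hX.1 h
    have n12 : X 1 ≠ X 2 := fun h => by simpa using hX.1 h
    have n20 : X 2 ≠ X 0 := fun h => by simpa using hX.1 h
    generalize X 0 = a at *
    generalize X 1 = b at *
    generalize X 2 = c at *
    -- bottom of `B` lies in `A ≻ B`
    have bot : ∀ A B D : C, A ≠ B → (Finset.univ.filter fun v => ¬ pref v B D ∧ ¬ pref v B A).card ≤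
        (Finset.univ.filter fun v => pref v A B).card := fun A B D hAB =>
      Finset.card_le_card fun w hw => by
        simp only [Finset.mem_filter, Finset.mem_univ, true_and] at hw ⊢
        exact tot w B A hAB.symm hw.2
    have top : ∀ A B D : C, B ≠ D → (Finset.univ.filter fun v => ¬ pref v A B ∧ ¬ pref v D B).card ≤
        (Finset.univ.filter fun v => pref v B D).card := fun A B D hBD =>
      Finset.card_le_card fun w hw => by
        simp only [Finset.mem_filter, Finset.mem_univ, true_and] at hw ⊢
        exact tot w D B hBD.symm hw.2
    have b0 := bot a b c n01
    have b1 := bot b c a n12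
    have b2 := bot c a b n20
    have t0 := top a b c n12
    have t1 := top b c a n20
    have t2 := top c a b n01
    have sum : ∀ P Q R P' Q' R' : V → Prop,
        (∀ v, (P v → ¬ Q v ∧ ¬ R v) ∧ (Q v → ¬ R v) ∧ (P' v ∨ Q' v ∨ R' v)) →
        (Finset.univ.filter P).card + (Finset.univ.filter Q).card + (Finset.univ.filter R).card ≤
        (Finset.univ.filter P').card + (Finset.univ.filter Q').card
          + (Finset.univ.filter R').card := by
      intro P Q R P' Q' R' h
      simp only [Finset.card_filter, ← Finset.sum_add_distrib]
      refine Finset.sum_le_sum fun v _ => ?_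
      have := h v
      split_ifs <;> first | omega | tauto
    have cyc : ∀ v, pref v a b ∨ pref v b c ∨ pref v c a := fun v => by
      by_contra hh
      push Not at hh
      have q1 := tot v _ _ n01 hh.1
      have q2 := tot v _ _ n12 hh.2.1
      exact hh.2.2 (tr v _ _ _ q2 q1)
    have s1 := sum (fun v => ¬ pref v a b ∧ ¬ pref v c b) (fun v => ¬ pref v b c ∧ ¬ pref v a c)
      (fun v => ¬ pref v c a ∧ ¬ pref v b a) (fun v => pref v a b) (fun v => pref v b c)
      (fun v => pref v c a) (fun v => ⟨fun p => ⟨fun q => q.1 (tot v _ _ n12.symm p.2), fun r => r.2 (tot v _ _ n01 p.1)⟩,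
        fun q r => r.1 (tot v _ _ n20.symm q.2), cyc v⟩)
    have s2 := sum (fun v => ¬ pref v a b ∧ ¬ pref v a c) (fun v => ¬ pref v b c ∧ ¬ pref v b a)
      (fun v => ¬ pref v c a ∧ ¬ pref v c b) (fun v => pref v a b) (fun v => pref v b c)
      (fun v => pref v c a) (fun v => ⟨fun p => ⟨fun q => q.2 (tot v _ _ n01 p.1), fun r => r.1 (tot v _ _ n20.symm p.2)⟩,
        fun q r => r.2 (tot v _ _ n12 q.1), cyc v⟩)
    omega
end

section
/- Let the candidate set be C = {X_1, ..., X_n} (any n ≥ 2) and let V be a set of at most 3 voters with an arbitrary voting profile. Then at least one of the bipartite graphs G(X_1,X_2), G(X_2,X_3), ..., G(X_{n-1},X_n), G(X_n,X_1) has a perfect matching. -/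
theorem veto_aux {C V : Type*} [Finite C] [DecidableEq V]
    (pref : V → C → C → Prop) (hpref : ∀ v, IsStrictTotalOrder C (pref v)) (f : V → C) (m : ℕ) :
    ∀ S T : Finset V, S.card = m + 1 → T.card = m + 1 →
      ∃ A ∈ f '' (T : Set V), ∃ g : V → V, Set.BijOn g (S : Set V) (T : Set V) ∧
        ∀ v ∈ S, f (g v) = A ∨ pref v A (f (g v)) := by
  induction m with
  | zero =>
    intro S T hS hT
    obtain ⟨s, rfl⟩ := Finset.card_eq_one.1 hS
    obtain ⟨t, rfl⟩ := Finset.card_eq_one.1 hT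
    refine ⟨f t, by simp, fun _ => t, by simp, by simp⟩
  | succ m ih =>
    intro S T hS hT
    obtain ⟨s, hs⟩ : S.Nonempty := Finset.card_pos.1 (by omega)
    have hTn : T.Nonempty := Finset.card_pos.1 (by omega)
    haveI := hpref s
    have hwf : WellFounded (Function.swap (pref s)) :=
      Finite.wellFounded_of_trans_of_irrefl _
    obtain ⟨c, ⟨t, ht, rfl⟩, hmin⟩ := hwf.has_min (f '' (T : Set V)) (hTn.to_set.image f)
    have ht' : t ∈ T := ht
    obtain ⟨A, ⟨a, ha, rfl⟩, g, hg, hgA⟩ := ih (S.erase s) (T.erase t)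
      (by rw [Finset.card_erase_of_mem hs]; omega) (by rw [Finset.card_erase_of_mem ht']; omega)
    have haT : a ∈ T := Finset.mem_of_mem_erase ha
    have hg' : Set.BijOn (Function.update g s t) (S.erase s : Finset V) (T.erase t : Finset V) := by
      refine hg.congr ?_
      intro x hx
      have hx' : x ≠ s := Finset.ne_of_mem_erase hx
      simp [Function.update_of_ne hx']
    refine ⟨f a, ⟨a, haT, rfl⟩, Function.update g s t, ?_, ?_⟩
    · have := hg'.insert (a := s) (by simp)
      simpa [Set.insert_eq_of_mem, hs, ht'] using this
    · intro v hv
      by_cases h : v = s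
      · subst h
        have h1 := hmin (f a) ⟨a, haT, rfl⟩
        simp only [Function.update_self]
        rcases trichotomous_of (pref v) (f a) (f t) with h | h | h
        · exact Or.inr h
        · exact Or.inl h.symm
        · exact absurd h h1
      · rw [Function.update_of_ne h]
        exact hgA v (Finset.mem_erase.2 ⟨h, hv⟩)

/-- Theorem 4.8 (Conjecture 4.6 for at most 3 voters): if the candidate set is
`C = {X_1, …, X_n}` with `n ≥ 2` and there are at most `3` voters, then for any voting
profile at least one of the bipartite graphs
`G(X_1,X_2), …, G(X_{n-1},X_n), G(X_n,X_1)` has a perfect matching.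
(`finRotate n` sends index `i` to `i + 1` cyclically.) -/
theorem stmt_9 {C V : Type*} [Fintype V] (hV : Fintype.card V ≤ 3)
    {n : ℕ} (hn : 2 ≤ n)
    (X : Fin n → C) (hX : Function.Bijective X)
    (pref : V → C → C → Prop) (hpref : ∀ v, IsStrictTotalOrder C (pref v)) :
    ∃ i : Fin n, HasPM pref (X i) (X (finRotate n i)) := by
  classical
  haveI : Finite C := Finite.of_surjective X hX.2
  rcases isEmpty_or_nonempty V with hE | hE
  · exact ⟨⟨0, by omega⟩, Equiv.refl V, fun v => (hE.false v).elim⟩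
  have htop : ∀ v : V, ∃ c : C, ∀ b : C, ¬ pref v b c := by
    intro v
    haveI := hpref v
    have hwf : WellFounded (pref v) := Finite.wellFounded_of_trans_of_irrefl _
    obtain ⟨c, -, hc⟩ := hwf.has_min (Set.univ : Set C) ⟨X ⟨0, by omega⟩, trivial⟩
    exact ⟨c, fun b => hc b trivial⟩
  choose f hf using htop
  have hcard : (Finset.univ : Finset V).card = (Fintype.card V - 1) + 1 := by
    have := Fintype.card_pos (α := V)
    rw [Finset.card_univ]; omega
  obtain ⟨A, -, g, hg, hgA⟩ := veto_aux pref hpref f _ Finset.univ Finset.univ hcard hcard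
  obtain ⟨i, rfl⟩ := hX.2 A
  have hgb : Function.Bijective g := by
    simpa [Set.bijOn_univ] using hg
  refine ⟨i, (Equiv.ofBijective g hgb).symm, fun v => ⟨f v, ?_, ?_⟩⟩
  · haveI := hpref v
    rcases trichotomous_of (pref v) (f v) (X (finRotate n i)) with h | h | h
    · exact Or.inr h
    · exact Or.inl h
    · exact absurd h (hf v _)
  · have h := hgA ((Equiv.ofBijective g hgb).symm v) (Finset.mem_univ _)
    have h2 : g ((Equiv.ofBijective g hgb).symm v) = v :=
      (Equiv.ofBijective g hgb).apply_symm_apply v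
    rw [h2] at h
    exact h
end

section
/- Let A ≠ B be candidates. If the bipartite graph G(A,B) has no perfect matching, then the set (w(A,B), w(B,A)) \ ⋃_{C ∈ C \ {A,B}} [w(C,A), w(C,B)] is nonempty, where (a,b) denotes the open interval and [a,b] the closed interval of reals. -/
theorem aux_wgt_le {C V : Type*} [Fintype V] [Nonempty V]
    (pref : V → C → C → Prop) (X Y : C) (S : Finset V) (h : ∀ v, pref v X Y → v ∈ S) :
    wgt pref X Y ≤ (S.card : ℝ) / (Fintype.card V : ℝ) := by
  classical
  unfold wgt
  gcongr
  rw [Nat.card_eq_fintype_card, Fintype.card_subtype]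
  apply Finset.card_le_card
  intro v hv
  exact h v (by simpa using hv)

theorem aux_le_wgt {C V : Type*} [Fintype V] [Nonempty V]
    (pref : V → C → C → Prop) (X Y : C) (S : Finset V) (h : ∀ v ∈ S, pref v X Y) :
    (S.card : ℝ) / (Fintype.card V : ℝ) ≤ wgt pref X Y := by
  classical
  unfold wgt
  gcongr
  rw [Nat.card_eq_fintype_card, Fintype.card_subtype]
  apply Finset.card_le_card
  intro v hv
  simpa using h v hv

theorem aux_wgt_add {C V : Type*} [Fintype V] [Nonempty V]
    (pref : V → C → C → Prop) (hpref : ∀ v, IsStrictTotalOrder C (pref v))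
    (X Y : C) (h : X ≠ Y) : wgt pref X Y + wgt pref Y X = 1 := by
  classical
  have hm : (Fintype.card V : ℝ) ≠ 0 := by
    exact_mod_cast Fintype.card_ne_zero
  unfold wgt
  rw [← add_div, div_eq_one_iff_eq hm]
  rw [Nat.card_eq_fintype_card, Nat.card_eq_fintype_card, Fintype.card_subtype,
    Fintype.card_subtype]
  have he : (Finset.univ.filter fun v => pref v Y X)
      = Finset.univ.filter fun v => ¬ pref v X Y := by
    ext v
    have := hpref v
    simp only [Finset.mem_filter, Finset.mem_univ, true_and]
    constructor
    · intro h1 h2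
      exact asymm_of (pref v) h1 h2
    · intro h1
      rcases trichotomous_of (pref v) X Y with h2 | h2 | h2
      · exact absurd h2 h1
      · exact absurd h2 h
      · exact h2
  rw [he]
  exact_mod_cast Finset.card_filter_add_card_filter_not (s := Finset.univ) (fun v => pref v X Y)

/-- Lemma 4.10: if the bipartite graph `G(A,B)` has no perfect matching, then the set
`(w(A,B), w(B,A)) \ ⋃_{C' ≠ A,B} [w(C',A), w(C',B)]` is nonempty. -/
theorem stmt_10 {C V : Type*} [Fintype C] [Fintype V] [Nonempty V]
    (pref : V → C → C → Prop) (hpref : ∀ v, IsStrictTotalOrder C (pref v))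
    (A B : C) (hAB : A ≠ B)
    (hnoPM : ¬ HasPM pref A B) :
    (Set.Ioo (wgt pref A B) (wgt pref B A) \
      ⋃ C' ∈ ({A, B}ᶜ : Set C), Set.Icc (wgt pref C' A) (wgt pref C' B)).Nonempty := by
  classical
  have tri : ∀ v X Y, X ≠ Y → ¬ pref v X Y → pref v Y X := by
    intro v X Y h h1
    have := hpref v
    rcases trichotomous_of (pref v) X Y with h2 | h2 | h2
    · exact absurd h2 h1
    · exact absurd h2 h
    · exact h2
  let T : V → Finset V := fun v => Finset.univ.filter fun v' => GEdge pref A B v v'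
  have hT : ∀ v v', v' ∈ T v ↔ GEdge pref A B v v' := by intro v v'; simp [T]
  have hall : ∃ S : Finset V, (S.biUnion T).card < S.card := by
    by_contra! hc
    obtain ⟨f, hf, hfT⟩ := (Finset.all_card_le_biUnion_card_iff_exists_injective T).1 hc
    exact hnoPM ⟨Equiv.ofBijective f (Finite.injective_iff_bijective.1 hf),
      fun v => (hT _ _).1 (hfT v)⟩
  obtain ⟨S, hS⟩ := hall
  set N := S.biUnion T with hN
  have hNm : ∀ v ∈ S, ∀ v', GEdge pref A B v v' → v' ∈ N := fun v hv v' h =>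
    Finset.mem_biUnion.2 ⟨v, hv, (hT _ _).2 h⟩
  have hm : (0 : ℝ) < Fintype.card V := by exact_mod_cast Fintype.card_pos
  have hSB : ∀ v ∈ S, pref v B A := by
    intro v hv
    apply tri v A B hAB
    intro h
    have h1 : S.card ≤ N.card :=
      Finset.card_le_card fun v' _ => hNm v hv v' ⟨A, Or.inr h, Or.inl rfl⟩
    omega
  obtain ⟨s, hs⟩ : S.Nonempty := Finset.card_pos.1 (by omega)
  have hAN : ∀ v, pref v A B → v ∈ N := fun v h => hNm s hs v ⟨B, Or.inl rfl, Or.inr h⟩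
  have e1 := aux_le_wgt pref B A S hSB
  have e2 := aux_wgt_le pref A B N hAN
  have e3 := aux_wgt_add pref hpref A B hAB
  have e4 : (N.card : ℝ) / Fintype.card V < (S.card : ℝ) / Fintype.card V := by
    gcongr
  obtain ⟨t, ht1, ht2⟩ := exists_between e4
  refine ⟨1 - t, ⟨by linarith, by linarith⟩, ?_⟩
  simp only [Set.mem_iUnion, not_exists]
  intro Z hZ hmem
  have hZA : Z ≠ A := fun h => hZ (by simp [h])
  have hZB : Z ≠ B := fun h => hZ (by simp [h])
  obtain ⟨h1, h2⟩ := hmem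
  by_cases hc : ∃ v ∈ S, pref v Z B
  · obtain ⟨v, hv, hvZ⟩ := hc
    have e5 := aux_wgt_le pref A Z N fun v' h => hNm v hv v' ⟨Z, Or.inr hvZ, Or.inr h⟩
    have e6 := aux_wgt_add pref hpref A Z hZA.symm
    linarith
  · push Not at hc
    have e5 := aux_le_wgt pref B Z S fun v hv => tri v Z B hZB (hc v hv)
    have e6 := aux_wgt_add pref hpref B Z hZB.symm
    linarith
end

section
/- Let C be a finite set of n candidates and let w : C × C → [0,1] satisfy w(X,Y) + w(Y,X) = 1 for all distinct X, Y. Suppose w is cyclically symmetric: there is a permutation τ of C that is a single n-cycle with w(τ(X),τ(Y)) = w(X,Y) for all distinct X, Y. Then for all distinct candidates A, B, the open interval (w(A,B), w(B,A)) is contained in ⋃_{C' ∈ C \ {A,B}} [w(C',A), w(C',B)]. -/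
/-- The computation in Lemma 4.11: let `w` be a pairwise weight function on a finite set
of candidates (`w X Y ∈ [0,1]` and `w X Y + w Y X = 1` for distinct `X, Y`) whose
weighted tournament graph is cyclically symmetric, i.e. there is a permutation `τ` of
the candidates forming a single `n`-cycle (every candidate is reachable from every other
by iterating `τ`) with `w (τ X) (τ Y) = w X Y` for all distinct `X, Y`. Then for all
distinct candidates `A, B`, the open interval `(w A B, w B A)` is contained in
`⋃_{C' ≠ A,B} [w C' A, w C' B]`. -/
theorem stmt_11 {C : Type*} [Fintype C]
    (w : C → C → ℝ)
    (hw01 : ∀ X Y : C, X ≠ Y → w X Y ∈ Set.Icc (0 : ℝ) 1)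
    (hwsum : ∀ X Y : C, X ≠ Y → w X Y + w Y X = 1)
    (τ : Equiv.Perm C)
    (hcyc : ∀ X Y : C, ∃ k : ℕ, (τ ^ k) X = Y)
    (hsym : ∀ X Y : C, X ≠ Y → w (τ X) (τ Y) = w X Y)
    (A B : C) (hAB : A ≠ B) :
    Set.Ioo (w A B) (w B A) ⊆
      ⋃ C' ∈ ({A, B}ᶜ : Set C), Set.Icc (w C' A) (w C' B) := by
  intro x hx
  by_contra hno
  simp only [Set.mem_iUnion, not_exists, Set.mem_compl_iff, Set.mem_insert_iff,
    Set.mem_singleton_iff, Set.mem_Icc, not_and, not_or] at hno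
  obtain ⟨k, hk⟩ := hcyc A B
  have hpow : ∀ (j : ℕ) (X Y : C), X ≠ Y → w ((τ ^ j) X) ((τ ^ j) Y) = w X Y := by
    intro j
    induction j with
    | zero => intro X Y _; simp
    | succ j ih =>
      intro X Y h
      rw [pow_succ', Equiv.Perm.mul_apply, Equiv.Perm.mul_apply,
        hsym _ _ (fun e => h ((τ ^ j).injective e)), ih X Y h]
  have hσ := hpow k
  generalize τ ^ k = σ at hk hσ
  have hinv : ∀ i : ℕ, (σ ^ i) B ≠ A ∧ x ≤ w ((σ ^ i) B) A := by
    intro i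
    induction i with
    | zero => exact ⟨hAB.symm, hx.2.le⟩
    | succ i ih =>
      rw [pow_succ', Equiv.Perm.mul_apply]
      generalize (σ ^ i) B = Y at ih
      obtain ⟨hYA, hY⟩ := ih
      have e : w (σ Y) B = w Y A := by rw [← hk]; exact hσ Y A hYA
      have h1 : σ Y ≠ A := by
        intro h
        rw [h] at e
        linarith [hx.1]
      have h2 : σ Y ≠ B := by
        intro h
        exact hYA (σ.injective (h.trans hk.symm))
      refine ⟨h1, ?_⟩
      by_contra h3
      exact hno (σ Y) ⟨h1, h2⟩ (le_of_not_ge h3) (e ▸ hY)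
  have hpos : 0 < orderOf σ := (isOfFinOrder_of_finite σ).orderOf_pos
  apply (hinv (orderOf σ - 1)).1
  rw [← hk, ← Equiv.Perm.mul_apply, ← pow_succ, Nat.sub_add_cancel hpos, pow_orderOf_eq_one]
  rfl
end

section
/- Suppose the weighted tournament graph induced by the voting profile is cyclically symmetric, i.e., there exists a permutation τ of the n candidates that is a single n-cycle such that w(τ(X),τ(Y)) = w(X,Y) for all distinct candidates X, Y, where w(X,Y) = |{v ∈ V : X ≻_v Y}|/m. Then for every pair of distinct candidates A, B, the bipartite graph G(A,B) has a perfect matching; equivalently, every candidate is in the matching uncovered set. -/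
/-- Lemma 4.11: if the weighted tournament graph induced by the voting profile is
cyclically symmetric — there is a permutation `τ` of the candidates forming a single
cycle on all of them (every candidate reachable from every other by iterating `τ`) with
`w (τ X) (τ Y) = w X Y` for all distinct `X, Y` — then for every pair of distinct
candidates `A, B` the bipartite graph `G(A,B)` has a perfect matching, i.e. every
candidate lies in the matching uncovered set. -/
theorem stmt_12 {C V : Type*} [Fintype C] [Fintype V] [Nonempty V]
    (pref : V → C → C → Prop) (hpref : ∀ v, IsStrictTotalOrder C (pref v))
    (τ : Equiv.Perm C)
    (hcyc : ∀ X Y : C, ∃ k : ℕ, (τ ^ k) X = Y)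
    (hsym : ∀ X Y : C, X ≠ Y → wgt pref (τ X) (τ Y) = wgt pref X Y)
    (A B : C) (hAB : A ≠ B) :
    HasPM pref A B := by
  classical
  obtain ⟨k, hk⟩ := hcyc A B
  have hcard : ∀ X Y : C, X ≠ Y →
      (Finset.univ.filter (fun v => pref v (τ X) (τ Y))).card
        = (Finset.univ.filter (fun v => pref v X Y)).card := by
    intro X Y h
    have h1 := hsym X Y h
    unfold wgt at h1
    have hm : (Fintype.card V : ℝ) ≠ 0 := by
      exact_mod_cast Fintype.card_ne_zero
    rw [div_left_inj' hm] at h1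
    have h2 := Nat.cast_injective h1
    rw [Nat.card_eq_fintype_card, Nat.card_eq_fintype_card, Fintype.card_subtype,
      Fintype.card_subtype] at h2
    exact h2
  have hpow : ∀ (j : ℕ) (X Y : C), X ≠ Y →
      (Finset.univ.filter (fun v => pref v ((τ ^ j) X) ((τ ^ j) Y))).card
        = (Finset.univ.filter (fun v => pref v X Y)).card := by
    intro j
    induction j with
    | zero => intro X Y _; simp
    | succ j ih =>
      intro X Y h
      have h1 := hcard ((τ ^ j) X) ((τ ^ j) Y) (fun e => h ((τ ^ j).injective e))
      rw [pow_succ', Equiv.Perm.mul_apply, Equiv.Perm.mul_apply, h1, ih X Y h]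
  have htri : ∀ v X Y, X ≠ Y → ¬ pref v X Y → pref v Y X := by
    intro v X Y h1 h2
    haveI := hpref v
    rcases trichotomous_of (pref v) X Y with h | h | h
    · exact absurd h h2
    · exact absurd h h1
    · exact h
  have hall := (Fintype.all_card_le_filter_rel_iff_exists_injective (GEdge pref A B)).1 ?_
  · obtain ⟨f, hf, h⟩ := hall
    exact ⟨Equiv.ofBijective f (Finite.injective_iff_bijective.1 hf), h⟩
  intro S
  by_contra hlt
  push Not at hlt
  obtain ⟨v₀, hv₀⟩ : S.Nonempty := by
    rw [← Finset.card_pos]; omega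
  let U : C → Prop := fun Z => ∃ v ∈ S, Z = B ∨ pref v Z B
  have hA : ¬ U A := by
    rintro ⟨v, hv, h⟩
    have : (Finset.univ.filter (fun b => ∃ a ∈ S, GEdge pref A B a b)) = Finset.univ := by
      ext b
      simp only [Finset.mem_filter, Finset.mem_univ, true_and, iff_true]
      exact ⟨v, hv, A, h, Or.inl rfl⟩
    rw [this] at hlt
    exact absurd (Finset.card_le_univ S) (by simpa using hlt)
  have hB : U B := ⟨v₀, hv₀, Or.inl rfl⟩
  have hstep : ∀ Y, U Y → U ((τ ^ k) Y) := by
    intro Y hY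
    by_contra hn
    have hYA : A ≠ Y := by rintro rfl; exact hA hY
    have h1 := hpow k A Y hYA
    rw [hk] at h1
    have h2 : S ⊆ Finset.univ.filter (fun v => pref v B ((τ ^ k) Y)) := by
      intro v hv
      simp only [Finset.mem_filter, Finset.mem_univ, true_and]
      exact htri v _ _ (fun e => hn ⟨v, hv, Or.inl e⟩) (fun e => hn ⟨v, hv, Or.inr e⟩)
    have h3 : Finset.univ.filter (fun v => pref v A Y) ⊆
        Finset.univ.filter (fun b => ∃ a ∈ S, GEdge pref A B a b) := by
      intro v' hv'
      simp only [Finset.mem_filter, Finset.mem_univ, true_and] at hv' ⊢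
      obtain ⟨v, hv, h⟩ := hY
      exact ⟨v, hv, Y, h, Or.inr hv'⟩
    have h4 := Finset.card_le_card h2
    have h5 := Finset.card_le_card h3
    have h6 := h4.trans (h1.le.trans h5)
    refine absurd h6 (not_le.2 ?_)
    convert hlt
  have hiter : ∀ j : ℕ, U (((τ ^ k) ^ j) B) := by
    intro j
    induction j with
    | zero => simpa using hB
    | succ j ih =>
      rw [pow_succ', Equiv.Perm.mul_apply]
      exact hstep _ ih
  have hpos : 0 < orderOf (τ ^ k) := orderOf_pos _
  have := hiter (orderOf (τ ^ k) - 1)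
  rw [← hk, ← Equiv.Perm.mul_apply, ← pow_succ, Nat.sub_add_cancel hpos,
    pow_orderOf_eq_one] at this
  exact hA this
end

section
/- Suppose the weighted tournament graph induced by the voting profile is cyclically symmetric, i.e., there exists a permutation τ of the n candidates that is a single n-cycle such that w(τ(X),τ(Y)) = w(X,Y) for all distinct candidates X, Y, where w(X,Y) = |{v ∈ V : X ≻_v Y}|/m. Then for every candidate A, every metric d consistent with the profile, and every candidate B, Σ_{v ∈ V} d(A,v) ≤ 3 · Σ_{v ∈ V} d(B,v); i.e., selecting any candidate yields distortion at most 3 on such a profile. -/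
theorem wgt_pow {C V : Type*} [Fintype V]
    (pref : V → C → C → Prop) (τ : Equiv.Perm C)
    (hsym : ∀ X Y : C, X ≠ Y → wgt pref (τ X) (τ Y) = wgt pref X Y) (k : ℕ) :
    ∀ X Y : C, X ≠ Y → wgt pref ((τ ^ k) X) ((τ ^ k) Y) = wgt pref X Y := by
  induction k with
  | zero => intro X Y _; simp
  | succ k ih =>
    intro X Y h
    rw [pow_succ', Equiv.Perm.mul_apply, Equiv.Perm.mul_apply, hsym _ _ (by simpa using h), ih X Y h]

theorem exists_step {C : Type*} [Fintype C] (σ : Equiv.Perm C) (A : C) (T : C → Prop)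
    (hA : ¬ T A) (hB : T (σ A)) : ∃ Y, T Y ∧ ¬ T (σ Y) := by
  by_contra! h
  have h1 : ∀ j : ℕ, T ((σ ^ (j + 1)) A) := by
    intro j
    induction j with
    | zero => simpa using hB
    | succ j ih =>
      rw [pow_succ', Equiv.Perm.mul_apply]
      exact h _ ih
  have h2 := h1 (orderOf σ - 1)
  rw [Nat.sub_add_cancel (orderOf_pos σ), pow_orderOf_eq_one] at h2
  exact hA h2

theorem hasPM_of_sym {C V : Type*} [Fintype C] [Fintype V] [Nonempty V]
    (pref : V → C → C → Prop) (hpref : ∀ v, IsStrictTotalOrder C (pref v))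
    (τ : Equiv.Perm C)
    (hcyc : ∀ X Y : C, ∃ k : ℕ, (τ ^ k) X = Y)
    (hsym : ∀ X Y : C, X ≠ Y → wgt pref (τ X) (τ Y) = wgt pref X Y)
    (A B : C) : HasPM pref A B := by
  classical
  obtain ⟨k, hk⟩ := hcyc A B
  have hw := wgt_pow pref τ hsym k
  generalize τ ^ k = σ at hk hw
  let t : V → Finset V := fun v => Finset.univ.filter fun v' => GEdge pref A B v v'
  have hall : ∀ S : Finset V, S.card ≤ (S.biUnion t).card := by
    intro S
    rcases S.eq_empty_or_nonempty with rfl | ⟨v0, hv0⟩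
    · simp
    by_cases hA : ∃ v ∈ S, A = B ∨ pref v A B
    · obtain ⟨v, hv, h⟩ := hA
      apply Finset.card_le_card
      intro v' _
      simp only [Finset.mem_biUnion, t, Finset.mem_filter, Finset.mem_univ, true_and]
      exact ⟨v, hv, A, h, Or.inl rfl⟩
    · obtain ⟨Y, ⟨v, hv, hY⟩, hX⟩ := exists_step σ A (fun Z => ∃ v ∈ S, Z = B ∨ pref v Z B) hA
        ⟨v0, hv0, Or.inl hk⟩
      have hne : A ≠ Y := by
        rintro rfl
        exact hA ⟨v, hv, hY⟩
      have h := hw A Y hne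
      rw [hk] at h
      unfold wgt at h
      have hm : (Fintype.card V : ℝ) ≠ 0 := by
        exact_mod_cast Fintype.card_ne_zero
      rw [div_left_inj' hm] at h
      have h' := Nat.cast_injective h
      rw [Nat.card_eq_fintype_card, Nat.card_eq_fintype_card, Fintype.card_subtype,
        Fintype.card_subtype] at h'
      calc S.card ≤ (Finset.univ.filter fun v => pref v B (σ Y)).card := by
            apply Finset.card_le_card
            intro u hu
            simp only [Finset.mem_filter, Finset.mem_univ, true_and]
            by_contra hc
            apply hX
            refine ⟨u, hu, ?_⟩
            by_contra hn
            rw [not_or] at hn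
            haveI := hpref u
            exact hn.1 (Std.Trichotomous.trichotomous (r := pref u) _ _ hn.2 hc)
        _ = _ := h'
        _ ≤ _ := by
            apply Finset.card_le_card
            intro u hu
            simp only [Finset.mem_filter, Finset.mem_univ, true_and] at hu
            simp only [Finset.mem_biUnion, t, Finset.mem_filter, Finset.mem_univ, true_and]
            exact ⟨v, hv, Y, hY, Or.inr hu⟩
  obtain ⟨f, hf, hft⟩ := (Finset.all_card_le_biUnion_card_iff_exists_injective t).1 hall
  refine ⟨Equiv.ofBijective f (Finite.injective_iff_bijective.1 hf), fun v => ?_⟩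
  have := hft v
  simpa [t] using this

/-- Theorem 4.9: if the weighted tournament graph induced by the voting profile is
cyclically symmetric — there is a permutation `τ` of the candidates forming a single
cycle on all of them (every candidate reachable from every other by iterating `τ`) with
`w (τ X) (τ Y) = w X Y` for all distinct `X, Y` — then selecting any candidate yields
distortion at most `3`: for every candidate `A`, every metric `d` consistent with the
profile and every candidate `B`, `∑_v d(A,v) ≤ 3 ∑_v d(B,v)`. -/
theorem stmt_13 {C V : Type*} [Fintype C] [Fintype V] [Nonempty V]
    (pref : V → C → C → Prop) (hpref : ∀ v, IsStrictTotalOrder C (pref v))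
    (τ : Equiv.Perm C)
    (hcyc : ∀ X Y : C, ∃ k : ℕ, (τ ^ k) X = Y)
    (hsym : ∀ X Y : C, X ≠ Y → wgt pref (τ X) (τ Y) = wgt pref X Y)
    (A : C)
    (d : C ⊕ V → C ⊕ V → ℝ) (hd : IsMetric d) (hcons : Consistent pref d)
    (B : C) :
    ∑ v : V, d (Sum.inl A) (Sum.inr v) ≤ 3 * ∑ v : V, d (Sum.inl B) (Sum.inr v) := by
  obtain ⟨M, hM⟩ := hasPM_of_sym pref hpref τ hcyc hsym A B
  obtain ⟨_, hs, ht⟩ := hd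
  have key : ∀ v, d (Sum.inl A) (Sum.inr (M v)) ≤
      2 * d (Sum.inl B) (Sum.inr v) + d (Sum.inl B) (Sum.inr (M v)) := by
    intro v
    obtain ⟨Z, h1, h2⟩ := hM v
    have e1 : d (Sum.inl Z) (Sum.inr v) ≤ d (Sum.inl B) (Sum.inr v) := by
      rcases h1 with rfl | h1
      · exact le_rfl
      · exact hcons _ _ _ h1
    have e2 : d (Sum.inl A) (Sum.inr (M v)) ≤ d (Sum.inl Z) (Sum.inr (M v)) := by
      rcases h2 with rfl | h2
      · exact le_rfl
      · exact hcons _ _ _ h2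
    have e3 := ht (Sum.inl Z) (Sum.inr v) (Sum.inr (M v))
    have e4 := ht (Sum.inr v) (Sum.inl B) (Sum.inr (M v))
    have e5 := hs (Sum.inr v) (Sum.inl B)
    linarith
  have hsum := Finset.sum_le_sum fun v (_ : v ∈ Finset.univ) => key v
  rw [Finset.sum_add_distrib, ← Finset.mul_sum,
    Equiv.sum_comp M (fun v => d (Sum.inl A) (Sum.inr v)),
    Equiv.sum_comp M (fun v => d (Sum.inl B) (Sum.inr v))] at hsum
  linarith
end

section
/- For every voting profile, there exists a candidate A such that for every metric d consistent with the profile and every candidate B, Σ_{v ∈ V} d(A,v) ≤ (2 + √5) · Σ_{v ∈ V} d(B,v). (Hence there is a deterministic social choice rule with distortion at most 2 + √5 ≈ 4.236.) -/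
theorem exists_last {C ι : Type*} (r : C → C → Prop) (hr : IsStrictTotalOrder C r)
    (s : Finset ι) (hs : s.Nonempty) (f : ι → C) :
    ∃ x ∈ s, ∀ y ∈ s, f y = f x ∨ r (f y) (f x) := by
  classical
  let _ := linearOrderOfSTO r
  obtain ⟨x, hx, h⟩ := Finset.exists_max_image s f hs
  exact ⟨x, hx, fun y hy => (h y hy).eq_or_lt⟩

theorem exists_first {C : Type*} [Fintype C] [Nonempty C] (r : C → C → Prop)
    (hr : IsStrictTotalOrder C r) : ∃ x, ∀ y, x = y ∨ r x y := by
  classical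
  let _ := linearOrderOfSTO r
  obtain ⟨x, _, h⟩ := Finset.exists_min_image Finset.univ (id : C → C) Finset.univ_nonempty
  exact ⟨x, fun y => (h y (Finset.mem_univ y)).eq_or_lt⟩

theorem veto_step {C V : Type*} (pref : V → C → C → Prop) (top : V → C)
    (htop : ∀ v y, top v = y ∨ pref v (top v) y)
    (d : C ⊕ V → C ⊕ V → ℝ) (hd : IsMetric d) (hc : Consistent pref d) (A B : C) (v w : V)
    (h : A = top w ∨ pref v A (top w)) :
    d (Sum.inl A) (Sum.inr v) ≤ d (Sum.inl B) (Sum.inr v) + 2 * d (Sum.inl B) (Sum.inr w) := by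
  obtain ⟨h0, hs, ht⟩ := hd
  have h1 : d (Sum.inl A) (Sum.inr v) ≤ d (Sum.inl (top w)) (Sum.inr v) := by
    rcases h with h | h
    · rw [h]
    · exact hc _ _ _ h
  have h2 : d (Sum.inl (top w)) (Sum.inr w) ≤ d (Sum.inl B) (Sum.inr w) := by
    rcases htop w B with h | h
    · rw [h]
    · exact hc _ _ _ h
  have h3 := ht (Sum.inl (top w)) (Sum.inr w) (Sum.inr v)
  have h4 := ht (Sum.inr w) (Sum.inl B) (Sum.inr v)
  have h5 := hs (Sum.inr w) (Sum.inl B)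
  linarith

theorem veto {C V : Type*} (pref : V → C → C → Prop)
    (hpref : ∀ v, IsStrictTotalOrder C (pref v)) (top : V → C)
    (htop : ∀ v y, top v = y ∨ pref v (top v) y) (n : ℕ) :
    ∀ S W : Finset V, S.card = n + 1 → W.card = n + 1 →
      ∃ a ∈ W, ∀ d : C ⊕ V → C ⊕ V → ℝ, IsMetric d → Consistent pref d → ∀ B : C,
        ∑ v ∈ S, d (Sum.inl (top a)) (Sum.inr v) ≤
          ∑ v ∈ S, d (Sum.inl B) (Sum.inr v) + 2 * ∑ w ∈ W, d (Sum.inl B) (Sum.inr w) := by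
  classical
  induction n with
  | zero =>
    intro S W hS hW
    obtain ⟨v, rfl⟩ := Finset.card_eq_one.mp hS
    obtain ⟨w, rfl⟩ := Finset.card_eq_one.mp hW
    refine ⟨w, by simp, fun d hd hc B => ?_⟩
    simpa using veto_step pref top htop d hd hc (top w) B v w (Or.inl rfl)
  | succ n ih =>
    intro S W hS hW
    obtain ⟨v, hv⟩ : S.Nonempty := Finset.card_pos.mp (by omega)
    obtain ⟨w, hw, hmax⟩ := exists_last (pref v) (hpref v) W (Finset.card_pos.mp (by omega)) top
    obtain ⟨a, ha, h⟩ := ih (S.erase v) (W.erase w)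
      (by rw [Finset.card_erase_of_mem hv]; omega) (by rw [Finset.card_erase_of_mem hw]; omega)
    have ha' := Finset.mem_of_mem_erase ha
    refine ⟨a, ha', fun d hd hc B => ?_⟩
    have h1 := h d hd hc B
    have h2 := veto_step pref top htop d hd hc (top a) B v w (hmax a ha')
    rw [← Finset.add_sum_erase S _ hv, ← Finset.add_sum_erase S _ hv,
      ← Finset.add_sum_erase W _ hw]
    linarith

theorem stmt_14 {C V : Type*} [Fintype C] [Nonempty C] [Fintype V]
    (pref : V → C → C → Prop) (hpref : ∀ v, IsStrictTotalOrder C (pref v)) :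
    ∃ A : C, ∀ d : C ⊕ V → C ⊕ V → ℝ, IsMetric d → Consistent pref d →
      ∀ B : C,
        ∑ v : V, d (Sum.inl A) (Sum.inr v) ≤
          (2 + Real.sqrt 5) * ∑ v : V, d (Sum.inl B) (Sum.inr v) := by
  rcases isEmpty_or_nonempty V with hV | hV
  · exact ⟨Classical.arbitrary C, fun d _ _ B => by simp⟩
  choose top htop using fun v => exists_first (pref v) (hpref v)
  have hcard : (Finset.univ : Finset V).card = (Fintype.card V - 1) + 1 := by
    have := Fintype.card_pos (α := V)
    rw [Finset.card_univ]; omega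
  obtain ⟨a, _, h⟩ := veto pref hpref top htop _ Finset.univ Finset.univ hcard hcard
  refine ⟨top a, fun d hd hc B => ?_⟩
  have h1 := h d hd hc B
  have h0 : 0 ≤ ∑ v : V, d (Sum.inl B) (Sum.inr v) := Finset.sum_nonneg fun v _ => hd.1 _ _
  have h5 : (1 : ℝ) ≤ Real.sqrt 5 := Real.one_le_sqrt.mpr (by norm_num)
  nlinarith [mul_nonneg (sub_nonneg.mpr h5) h0]
end

section
/- There exists a voting profile with 4 candidates A, B, C, D and 100 voters (explicitly: 35 voters with B ≻ A ≻ D ≻ C, 10 with C ≻ B ≻ A ≻ D, 15 with D ≻ C ≻ B ≻ A, 10 with C ≻ D ≻ B ≻ A, 15 with A ≻ D ≻ C ≻ B, 10 with C ≻ A ≻ D ≻ B, 5 with C ≻ D ≻ A ≻ B) such that for every consecutive pair (X,Y) in the cycle (A,B), (B,C), (C,D), (D,A), the set (w(X,Y), w(Y,X)) \ ⋃_{Z ∈ C \ {X,Y}} [w(Z,X), w(Z,Y)] is nonempty, while nevertheless the bipartite graphs G(C,D) and G(D,A) have perfect matchings. -/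
/-- The explicit voting profile of Example 4.12, given by the rank each of the 100
voters assigns to the candidates `A = 0`, `B = 1`, `C = 2`, `D = 3` (rank `0` is the
most preferred):
voters `0–34` have `B ≻ A ≻ D ≻ C`, voters `35–44` have `C ≻ B ≻ A ≻ D`,
voters `45–59` have `D ≻ C ≻ B ≻ A`, voters `60–69` have `C ≻ D ≻ B ≻ A`,
voters `70–84` have `A ≻ D ≻ C ≻ B`, voters `85–94` have `C ≻ A ≻ D ≻ B`,
voters `95–99` have `C ≻ D ≻ A ≻ B`. -/
def rank100 (v : Fin 100) : Fin 4 → ℕ :=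
  if v.val < 35 then ![1, 0, 3, 2]        -- B ≻ A ≻ D ≻ C
  else if v.val < 45 then ![2, 1, 0, 3]   -- C ≻ B ≻ A ≻ D
  else if v.val < 60 then ![3, 2, 1, 0]   -- D ≻ C ≻ B ≻ A
  else if v.val < 70 then ![3, 2, 0, 1]   -- C ≻ D ≻ B ≻ A
  else if v.val < 85 then ![0, 3, 2, 1]   -- A ≻ D ≻ C ≻ B
  else if v.val < 95 then ![1, 3, 0, 2]   -- C ≻ A ≻ D ≻ B
  else ![2, 3, 0, 1]                      -- C ≻ D ≻ A ≻ B

/-- Voter `v` prefers candidate `X` to `Y` iff `X` has a smaller rank. -/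
def prefEx (v : Fin 100) (X Y : Fin 4) : Prop := rank100 v X < rank100 v Y

set_option linter.unusedSimpArgs false

instance instDecPrefEx (v : Fin 100) (X Y : Fin 4) : Decidable (prefEx v X Y) :=
  inferInstanceAs (Decidable (rank100 v X < rank100 v Y))

instance instDecGEdge (A B : Fin 4) (v v' : Fin 100) : Decidable (GEdge prefEx A B v v') :=
  inferInstanceAs (Decidable (∃ Z : Fin 4, (Z = B ∨ prefEx v Z B) ∧ (Z = A ∨ prefEx v' A Z)))

/-- Permute the twenty blocks of five voters. -/
def blk (σ : Fin 20 → ℕ) (v : Fin 100) : Fin 100 :=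
  Fin.ofNat 100 (5 * σ (Fin.ofNat 20 (v.val / 5)) + v.val % 5)

def sg1 : Fin 20 → ℕ := ![10, 14, 19, 12, 11, 16, 15, 6, 5, 18, 17, 13, 4, 3, 9, 8, 7, 2, 1, 0]
def ti1 : Fin 20 → ℕ := ![19, 18, 17, 13, 12, 8, 7, 16, 15, 14, 0, 4, 3, 11, 1, 6, 5, 10, 9, 2]

def sg2 : Fin 20 → ℕ := ![19, 18, 17, 16, 15, 14, 13, 9, 6, 8, 7, 5, 4, 3, 12, 11, 10, 2, 1, 0]
def ti2 : Fin 20 → ℕ := ![19, 18, 17, 13, 12, 11, 8, 10, 9, 7, 16, 15, 14, 6, 5, 4, 3, 2, 1, 0]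

theorem wgt_eq (X Y : Fin 4) (n : ℕ)
    (h : (Finset.univ.filter fun v : Fin 100 => prefEx v X Y).card = n) :
    wgt prefEx X Y = (n : ℝ) / 100 := by
  unfold wgt
  rw [Nat.card_eq_fintype_card, Fintype.card_subtype, h]
  simp

theorem w01 : wgt prefEx 0 1 = 30 / 100 := by
  have h := wgt_eq 0 1 30 (by decide +kernel)
  exact_mod_cast h

theorem w02 : wgt prefEx 0 2 = 50 / 100 := by
  have h := wgt_eq 0 2 50 (by decide +kernel)
  exact_mod_cast h

theorem w03 : wgt prefEx 0 3 = 70 / 100 := by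
  have h := wgt_eq 0 3 70 (by decide +kernel)
  exact_mod_cast h

theorem w10 : wgt prefEx 1 0 = 70 / 100 := by
  have h := wgt_eq 1 0 70 (by decide +kernel)
  exact_mod_cast h

theorem w12 : wgt prefEx 1 2 = 35 / 100 := by
  have h := wgt_eq 1 2 35 (by decide +kernel)
  exact_mod_cast h

theorem w13 : wgt prefEx 1 3 = 45 / 100 := by
  have h := wgt_eq 1 3 45 (by decide +kernel)
  exact_mod_cast h

theorem w20 : wgt prefEx 2 0 = 50 / 100 := by
  have h := wgt_eq 2 0 50 (by decide +kernel)
  exact_mod_cast h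

theorem w21 : wgt prefEx 2 1 = 65 / 100 := by
  have h := wgt_eq 2 1 65 (by decide +kernel)
  exact_mod_cast h

theorem w23 : wgt prefEx 2 3 = 35 / 100 := by
  have h := wgt_eq 2 3 35 (by decide +kernel)
  exact_mod_cast h

theorem w30 : wgt prefEx 3 0 = 30 / 100 := by
  have h := wgt_eq 3 0 30 (by decide +kernel)
  exact_mod_cast h

theorem w31 : wgt prefEx 3 1 = 55 / 100 := by
  have h := wgt_eq 3 1 55 (by decide +kernel)
  exact_mod_cast h

theorem w32 : wgt prefEx 3 2 = 65 / 100 := by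
  have h := wgt_eq 3 2 65 (by decide +kernel)
  exact_mod_cast h

/-- Example 4.12: for the explicit profile above (4 candidates `A = 0`, `B = 1`,
`C = 2`, `D = 3` and 100 voters), each voter's preference is a strict total order; for
every consecutive pair `(X,Y)` in the cycle `(A,B), (B,C), (C,D), (D,A)` the set
`(w(X,Y), w(Y,X)) \ ⋃_{Z ≠ X,Y} [w(Z,X), w(Z,Y)]` is nonempty; and nevertheless the
bipartite graphs `G(C,D)` and `G(D,A)` have perfect matchings. -/
theorem stmt_15 :
    (∀ v, IsStrictTotalOrder (Fin 4) (prefEx v)) ∧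
    (∀ p ∈ [((0 : Fin 4), (1 : Fin 4)), (1, 2), (2, 3), (3, 0)],
      (Set.Ioo (wgt prefEx p.1 p.2) (wgt prefEx p.2 p.1) \
        ⋃ Z ∈ ({p.1, p.2}ᶜ : Set (Fin 4)),
          Set.Icc (wgt prefEx Z p.1) (wgt prefEx Z p.2)).Nonempty) ∧
    HasPM prefEx 2 3 ∧ HasPM prefEx 3 0 := by
  refine ⟨?_, ?_, ?_, ?_⟩
  · intro v
    have h1 : ∀ v, ∀ a b, rank100 v a = rank100 v b → a = b := by decide +kernel
    exact
      { irrefl := fun a => lt_irrefl (rank100 v a)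
        trans := fun a b c h h' => lt_trans (a := rank100 v a) h h'
        trichotomous := fun a b h h' => h1 v a b (le_antisymm (not_lt.mp h') (not_lt.mp h)) }
  · intro p hp
    simp only [List.mem_cons, List.not_mem_nil, or_false] at hp
    rcases hp with rfl | rfl | rfl | rfl
    · refine ⟨67 / 100, ?_, ?_⟩
      · simp only [w01, w02, w03, w10, w12, w13, w20, w21, w23, w30, w31, w32, Set.mem_Ioo]
        norm_num
      · simp only [Set.mem_iUnion, not_exists]
        intro Z hZ
        fin_cases Z <;> simp [w01, w02, w03, w10, w12, w13, w20, w21, w23, w30, w31, w32] at hZ ⊢ <;> norm_num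
    · refine ⟨52 / 100, ?_, ?_⟩
      · simp only [w01, w02, w03, w10, w12, w13, w20, w21, w23, w30, w31, w32, Set.mem_Ioo]
        norm_num
      · simp only [Set.mem_iUnion, not_exists]
        intro Z hZ
        fin_cases Z <;> simp [w01, w02, w03, w10, w12, w13, w20, w21, w23, w30, w31, w32] at hZ ⊢ <;> norm_num
    · refine ⟨47 / 100, ?_, ?_⟩
      · simp only [w01, w02, w03, w10, w12, w13, w20, w21, w23, w30, w31, w32, Set.mem_Ioo]
        norm_num
      · simp only [Set.mem_iUnion, not_exists]
        intro Z hZ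
        fin_cases Z <;> simp [w01, w02, w03, w10, w12, w13, w20, w21, w23, w30, w31, w32] at hZ ⊢ <;> norm_num
    · refine ⟨32 / 100, ?_, ?_⟩
      · simp only [w01, w02, w03, w10, w12, w13, w20, w21, w23, w30, w31, w32, Set.mem_Ioo]
        norm_num
      · simp only [Set.mem_iUnion, not_exists]
        intro Z hZ
        fin_cases Z <;> simp [w01, w02, w03, w10, w12, w13, w20, w21, w23, w30, w31, w32] at hZ ⊢ <;> norm_num
  · exact ⟨⟨blk sg1, blk ti1, by unfold Function.LeftInverse; decide +kernel,
      by unfold Function.RightInverse Function.LeftInverse; decide +kernel⟩, by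
        change ∀ v, GEdge prefEx 2 3 v (blk sg1 v)
        decide +kernel⟩
  · exact ⟨⟨blk sg2, blk ti2, by unfold Function.LeftInverse; decide +kernel,
      by unfold Function.RightInverse Function.LeftInverse; decide +kernel⟩, by
        change ∀ v, GEdge prefEx 3 0 v (blk sg2 v)
        decide +kernel⟩
end

section
/- Let A ≠ B be candidates, let d be a metric consistent with the profile, and suppose G(A,B) has a perfect matching. Let AB = {v ∈ V : A ≻_v B} and BA = V \ AB. Then Σ_{v ∈ BA} (d(A,v) − 3·d(B,v)) ≤ (|BA| − (m − 2·|AB|)) · d(A,B), where m = |V|. (This is the key estimate in the proof that matching-uncovered candidates have distortion 3: any matching in G(A,B) restricted to the left and right copies of BA has size at least m − 2|AB|, and each matched left–right pair contributes cancelling terms.) -/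
/-- The key estimate in the proof of Theorem 4.4: for distinct candidates `A, B`, a
metric `d` consistent with the profile, and a perfect matching in `G(A,B)`, the sum over
the voters `BA` preferring `B` to `A` of `d(A,v) - 3 d(B,v)` is at most
`(|BA| - (m - 2|AB|)) · d(A,B)`. -/
theorem stmt_16 {C V : Type*} [Fintype C] [Fintype V]
    (pref : V → C → C → Prop) [∀ v X Y, Decidable (pref v X Y)]
    (hpref : ∀ v, IsStrictTotalOrder C (pref v))
    (A B : C) (hAB : A ≠ B)
    (d : C ⊕ V → C ⊕ V → ℝ) (hd : IsMetric d) (hcons : Consistent pref d)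
    (hPM : HasPM pref A B) :
    ∑ v ∈ Finset.univ.filter (fun v : V => ¬ pref v A B),
        (d (Sum.inl A) (Sum.inr v) - 3 * d (Sum.inl B) (Sum.inr v)) ≤
      (((Finset.univ.filter (fun v : V => ¬ pref v A B)).card : ℝ) -
          ((Fintype.card V : ℝ) -
            2 * ((Finset.univ.filter (fun v : V => pref v A B)).card : ℝ))) *
        d (Sum.inl A) (Sum.inl B) := by
  classical
  obtain ⟨h0, hsym, htri⟩ := hd
  obtain ⟨M, hM⟩ := hPM
  set D := d (Sum.inl A) (Sum.inl B) with hD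
  have hcard : ((Finset.univ.filter (fun v : V => pref v A B)).card : ℝ) +
      ((Finset.univ.filter (fun v : V => ¬ pref v A B)).card : ℝ) = (Fintype.card V : ℝ) := by
    exact_mod_cast Finset.card_filter_add_card_filter_not (s := Finset.univ)
      (fun v : V => pref v A B)
  have hR : (((Finset.univ.filter (fun v : V => ¬ pref v A B)).card : ℝ) -
          ((Fintype.card V : ℝ) -
            2 * ((Finset.univ.filter (fun v : V => pref v A B)).card : ℝ))) * D
      = ∑ v : V, if pref v A B then D else 0 := by
    rw [← Finset.sum_filter, Finset.sum_const, nsmul_eq_mul, ← hcard]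
    ring
  have hL : ∑ v ∈ Finset.univ.filter (fun v : V => ¬ pref v A B),
        (d (Sum.inl A) (Sum.inr v) - 3 * d (Sum.inl B) (Sum.inr v))
      = ∑ v : V, ((if ¬ pref (M v) A B then
            d (Sum.inl A) (Sum.inr (M v)) - d (Sum.inl B) (Sum.inr (M v)) else 0)
          - (if ¬ pref v A B then 2 * d (Sum.inl B) (Sum.inr v) else 0)) := by
    symm
    rw [Finset.sum_sub_distrib, Equiv.sum_comp M (fun v => if ¬ pref v A B then
            d (Sum.inl A) (Sum.inr v) - d (Sum.inl B) (Sum.inr v) else 0),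
      ← Finset.sum_filter, ← Finset.sum_filter, ← Finset.sum_sub_distrib]
    exact Finset.sum_congr rfl fun v _ => by ring
  rw [hR, hL]
  refine Finset.sum_le_sum fun v _ => ?_
  have hDn : 0 ≤ D := h0 _ _
  have h1 := h0 (Sum.inl B) (Sum.inr v)
  have h2 := htri (Sum.inl A) (Sum.inl B) (Sum.inr (M v))
  have h3 : d (Sum.inl A) (Sum.inr (M v)) ≤
      2 * d (Sum.inl B) (Sum.inr v) + d (Sum.inl B) (Sum.inr (M v)) := by
    obtain ⟨Z, hZ1, hZ2⟩ := hM v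
    have a1 : d (Sum.inl Z) (Sum.inr v) ≤ d (Sum.inl B) (Sum.inr v) := by
      rcases hZ1 with h | h
      · rw [h]
      · exact hcons _ _ _ h
    have a2 : d (Sum.inl A) (Sum.inr (M v)) ≤ d (Sum.inl Z) (Sum.inr (M v)) := by
      rcases hZ2 with h | h
      · rw [h]
      · exact hcons _ _ _ h
    have a3 := htri (Sum.inl Z) (Sum.inr v) (Sum.inr (M v))
    have a4 := htri (Sum.inr v) (Sum.inl B) (Sum.inr (M v))
    have a5 := hsym (Sum.inr v) (Sum.inl B)
    linarith
  by_cases c1 : pref v A B <;> by_cases c2 : pref (M v) A B <;> simp only [c1, c2, not_true_eq_false, not_false_eq_true, if_true, if_false] <;> linarith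
end

section
/- If the matching uncovered set is nonempty, then the social choice rule that selects the alphabetically smallest candidate in the matching uncovered set (MatchingUncovered) has distortion at most 3 on that profile: for the selected candidate A, every metric d consistent with the profile, and every candidate B, Σ_{v ∈ V} d(A,v) ≤ 3 · Σ_{v ∈ V} d(B,v). -/
/-- Corollary 4.5: if the matching uncovered set is nonempty, then the rule
`MatchingUncovered`, which selects the alphabetically smallest candidate `A` of the
matching uncovered set (smallest in the linear order on candidates), has distortion at
most `3` on that profile: for every metric `d` consistent with the profile and every
candidate `B`, `∑_v d(A,v) ≤ 3 ∑_v d(B,v)`. -/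
theorem stmt_19 {C V : Type*} [Fintype C] [Fintype V] [LinearOrder C]
    (pref : V → C → C → Prop) (hpref : ∀ v, IsStrictTotalOrder C (pref v))
    (A : C)
    (hA : ∀ B : C, B ≠ A → HasPM pref A B)
    (hmin : ∀ A' : C, (∀ B : C, B ≠ A' → HasPM pref A' B) → A ≤ A')
    (d : C ⊕ V → C ⊕ V → ℝ) (hd : IsMetric d) (hcons : Consistent pref d)
    (B : C) :
    ∑ v : V, d (Sum.inl A) (Sum.inr v) ≤ 3 * ∑ v : V, d (Sum.inl B) (Sum.inr v) := by
  obtain ⟨h0, hs, ht⟩ := hd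
  by_cases hBA : B = A
  · subst hBA
    have : 0 ≤ ∑ v : V, d (Sum.inl B) (Sum.inr v) := Finset.sum_nonneg fun v _ => h0 _ _
    linarith
  obtain ⟨M, hM⟩ := hA B hBA
  have key : ∀ v : V, d (Sum.inl A) (Sum.inr (M v)) ≤
      2 * d (Sum.inl B) (Sum.inr v) + d (Sum.inl B) (Sum.inr (M v)) := by
    intro v
    obtain ⟨Z, h1, h2⟩ := hM v
    have e1 : d (Sum.inl Z) (Sum.inr v) ≤ d (Sum.inl B) (Sum.inr v) := by
      rcases h1 with rfl | h
      · exact le_refl _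
      · exact hcons _ _ _ h
    have e2 : d (Sum.inl A) (Sum.inr (M v)) ≤ d (Sum.inl Z) (Sum.inr (M v)) := by
      rcases h2 with rfl | h
      · exact le_refl _
      · exact hcons _ _ _ h
    have t1 := ht (Sum.inl Z) (Sum.inr v) (Sum.inr (M v))
    have t2 := ht (Sum.inr v) (Sum.inl B) (Sum.inr (M v))
    have t3 := hs (Sum.inr v) (Sum.inl B)
    linarith
  have hsum := Finset.sum_le_sum fun v (_ : v ∈ Finset.univ) => key v
  rw [Finset.sum_add_distrib, ← Finset.mul_sum,
    Equiv.sum_comp M (fun v => d (Sum.inl A) (Sum.inr v)),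
    Equiv.sum_comp M (fun v => d (Sum.inl B) (Sum.inr v))] at hsum
  linarith
end
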